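/- The function h defined on [0, 1) by h(s) = √(1 − s) · ∑_{k=0}^∞ s^k/√(4k + 1) is strictly decreasing on (0, 1). -/

import Mathlib

/-- The function `h s = √(1 - s) · ∑ₖ sᵏ / √(4k + 1)`. -/
noncomputable def hFun (s : ℝ) : ℝ :=
  Real.sqrt (1 - s) * ∑' k : ℕ, s ^ k / Real.sqrt (4 * (k : ℝ) + 1)

/-!
If `f s = ∑ₖ aₖ sᵏ` on the unit ball, then the derivative of `(1 - s) ^ c * f s` is
`(1 - s) ^ (c - 1) * ((1 - s) * f' s - c * f s)`, and the `k`-th Taylor coefficient of the second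
factor is `(k + 1) aₖ₊₁ - (k + c) aₖ`. So `(1 - s) ^ c * f s` decreases on `[0, 1)` as soon as the
ratios `aₖ₊₁ / aₖ` stay below `(k + c) / (k + 1)`, the coefficient ratios of `(1 - s) ^ (-c)`. For
`c = 1 / 2` and `aₖ = 1 / √(αk + β)` this amounts to
`(k + 1)² (αk + β) < (k + 1 / 2)² (αk + α + β)`, which holds for all `k` once `0 < 4β ≤ α`.
-/

open Set FormalMultilinearSeries
open scoped NNReal ENNReal

section PowerSeries

variable {𝕜 : Type*} [NontriviallyNormedField 𝕜]

lemma hasFPowerSeriesOnBall_tsum_of_norm_mul_pow_le [CompleteSpace 𝕜] {a : ℕ → 𝕜} {C : ℝ}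
    {r : ℝ≥0} (hr : 0 < r) (ha : ∀ k, ‖a k‖ * (r : ℝ) ^ k ≤ C) :
    HasFPowerSeriesOnBall (fun x => ∑' k, a k * x ^ k) (ofScalars 𝕜 a) 0 r := by
  have h_radius : (r : ℝ≥0∞) ≤ (ofScalars 𝕜 a).radius :=
    le_radius_of_bound _ C fun k => by simpa only [ofScalars_norm] using ha k
  have hr' : (0 : ℝ≥0∞) < r := mod_cast hr
  have h_sum : (ofScalars 𝕜 a).sum = fun x => ∑' k, a k * x ^ k := ofScalarsSum_eq_tsum a
  rw [← h_sum]
  exact (FormalMultilinearSeries.hasFPowerSeriesOnBall _ (hr'.trans_le h_radius)).mono hr' h_radius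

lemma hasSum_deriv_of_hasFPowerSeriesOnBall {F : Type*} [NormedAddCommGroup F] [NormedSpace 𝕜 F]
    [CompleteSpace F] {f : 𝕜 → F} {p : FormalMultilinearSeries 𝕜 𝕜 F} {x y : 𝕜} {r : ℝ≥0∞}
    (hf : HasFPowerSeriesOnBall f p x r) (hy : y ∈ Metric.eball 0 r) :
    HasSum (fun k : ℕ => y ^ k • (k + 1) • p.coeff (k + 1)) (deriv f (x + y)) := by
  have h_fderiv := (hf.fderiv.hasSum hy).mapL (ContinuousLinearMap.apply 𝕜 F 1)
  simpa using h_fderiv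

lemma hasSum_one_sub_mul_deriv_sub_mul [CompleteSpace 𝕜] {f : 𝕜 → 𝕜}
    {p : FormalMultilinearSeries 𝕜 𝕜 𝕜} {r : ℝ≥0∞} (hf : HasFPowerSeriesOnBall f p 0 r) {s : 𝕜}
    (hs : s ∈ Metric.eball 0 r) (c : 𝕜) :
    HasSum (fun k : ℕ => ((k + 1) * p.coeff (k + 1) - (k + c) * p.coeff k) * s ^ k)
      ((1 - s) * deriv f s - c * f s) := by
  have h_f : HasSum (fun k => p.coeff k * s ^ k) (f s) := by
    simpa [mul_comm] using hf.hasSum hs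
  have h_deriv : HasSum (fun k : ℕ => (k + 1) * p.coeff (k + 1) * s ^ k) (deriv f s) := by
    simpa [mul_comm] using hasSum_deriv_of_hasFPowerSeriesOnBall hf hs
  have h_mul_deriv : HasSum (fun k : ℕ => k * p.coeff k * s ^ k) (s * deriv f s) := by
    rw [← hasSum_nat_add_iff' 1]
    simpa [pow_succ', mul_left_comm] using h_deriv.mul_left s
  convert! (h_deriv.sub h_mul_deriv).sub (h_f.mul_left c) using 1
  · ext k
    ring
  · ring

end PowerSeries

lemma strictAntiOn_one_sub_rpow_mul {f : ℝ → ℝ} {p : FormalMultilinearSeries ℝ ℝ ℝ} {c : ℝ}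
    (hf : HasFPowerSeriesOnBall f p 0 1)
    (h_le : ∀ k : ℕ, (k + 1) * p.coeff (k + 1) ≤ (k + c) * p.coeff k)
    (h_lt : ∃ k : ℕ, (k + 1) * p.coeff (k + 1) < (k + c) * p.coeff k) :
    StrictAntiOn (fun s => (1 - s) ^ c * f s) (Ico 0 1) := by
  have h_ball : ∀ s ∈ Ico (0 : ℝ) 1, s ∈ Metric.eball (0 : ℝ) 1 := fun s hs => by
    simpa [← ENNReal.ofReal_one, abs_of_nonneg hs.1] using hs.2
  refine strictAntiOn_of_deriv_neg (convex_Ico 0 1) ?_ fun s hs => ?_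
  · refine ContinuousOn.mul ?_ (hf.continuousOn.mono h_ball)
    exact (by fun_prop : ContinuousOn (fun s : ℝ => 1 - s) _).rpow_const
      fun s hs => .inl (sub_pos.2 hs.2).ne'
  rw [interior_Ico] at hs
  have hs_ball := h_ball s (Ioo_subset_Ico_self hs)
  have h_one_sub : 0 < 1 - s := sub_pos.2 hs.2
  have h_neg : (1 - s) * deriv f s - c * f s < 0 := by
    obtain ⟨k, hk⟩ := h_lt
    exact hasSum_lt (fun j => mul_nonpos_of_nonpos_of_nonneg (sub_nonpos.2 (h_le j))
      (pow_nonneg hs.1.le j)) (mul_neg_of_neg_of_pos (sub_neg.2 hk) (pow_pos hs.1 k))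
      (hasSum_one_sub_mul_deriv_sub_mul hf hs_ball c) hasSum_zero
  have h_f : HasDerivAt f (deriv f s) s :=
    (hf.analyticAt_of_mem hs_ball).differentiableAt.hasDerivAt
  have h_rpow : HasDerivAt (fun s : ℝ => (1 - s) ^ c) (-1 * c * (1 - s) ^ (c - 1)) s :=
    ((hasDerivAt_id s).const_sub 1).rpow_const (.inl h_one_sub.ne')
  calc deriv (fun s => (1 - s) ^ c * f s) s
      = (1 - s) ^ (c - 1) * ((1 - s) * deriv f s - c * f s) := by
        rw [(h_rpow.fun_mul h_f).deriv, ← sub_add_cancel c 1, Real.rpow_add_one h_one_sub.ne']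
        ring_nf
    _ < 0 := mul_neg_of_pos_of_neg (Real.rpow_pos_of_pos h_one_sub _) h_neg

lemma add_one_mul_inv_sqrt_lt {α β x : ℝ} (hβ : 0 < β) (hαβ : 4 * β ≤ α) (hx : 0 ≤ x) :
    (x + 1) * (√(α * (x + 1) + β))⁻¹ < (x + 1 / 2) * (√(α * x + β))⁻¹ := by
  have hα : 0 < α := by linarith
  rw [← div_eq_mul_inv, ← div_eq_mul_inv, div_lt_div_iff₀ (by positivity) (by positivity)]
  refine lt_of_pow_lt_pow_left₀ 2 (by positivity) ?_
  rw [mul_pow, mul_pow, Real.sq_sqrt (by positivity), Real.sq_sqrt (by positivity)]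
  have h_gap : 0 < x * (α - 4 * β) + (α - 3 * β) :=
    add_pos_of_nonneg_of_pos (mul_nonneg hx (sub_nonneg.2 hαβ)) (by linarith)
  linear_combination h_gap / 4

theorem hFun_strictAntiOn_general {α β : ℝ} (hβ : 0 < β) (hαβ : 4 * β ≤ α) :
    StrictAntiOn (fun s : ℝ => √(1 - s) * ∑' k : ℕ, s ^ k / √(α * k + β)) (Ico 0 1) := by
  have h_coeff_le (k : ℕ) : ‖(√(α * k + β))⁻¹‖ * ((1 : ℝ≥0) : ℝ) ^ k ≤ (√β)⁻¹ := by
    have hα : 0 ≤ α := by linarith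
    simp only [NNReal.coe_one, one_pow, mul_one, norm_inv, Real.norm_of_nonneg (Real.sqrt_nonneg _)]
    gcongr
    exact le_add_of_nonneg_left (by positivity)
  have h_series := hasFPowerSeriesOnBall_tsum_of_norm_mul_pow_le one_pos h_coeff_le
  have h_ratio (k : ℕ) := add_one_mul_inv_sqrt_lt hβ hαβ k.cast_nonneg
  have h_anti := strictAntiOn_one_sub_rpow_mul (c := 1 / 2) h_series
    (fun k => by simpa using (h_ratio k).le) ⟨0, by simpa using h_ratio 0⟩
  simpa only [Real.sqrt_eq_rpow (1 - _), div_eq_inv_mul] using h_anti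

theorem hFun_strictAntiOn : StrictAntiOn hFun (Set.Ioo (0 : ℝ) 1) :=
  (hFun_strictAntiOn_general one_pos (mul_one 4).le).mono Ioo_subset_Ico_self
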